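/- arXiv:1708.00766 — 2 statements merged into one kernel-verified Lean document; each statement's English description precedes it below -/
import Mathlib

section
/- The sequence of real numbers r ↦ 2/r + 2 · Σ_{n=1}^{2r−1} 1/√(r² + 2nr − n²), indexed by integers r ≥ 1, converges to π as r → ∞. -/
open Filter Finset Real

/-! Since `r² + 2nr - n² = r² (2 - (n / r - 1)²)`, and the value of this expression at `n = 0` is
`r²`, the given expression is twice the left Riemann sum of `x ↦ 1 / √(2 - x²)` on `[-1, 1]` with
mesh `1 / r`. The integral of this function is `arcsin (1 / √2) - arcsin (-1 / √2) = π / 2`. -/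

section RiemannSum

open MeasureTheory Topology

variable {E : Type*} [NormedAddCommGroup E] [NormedSpace ℝ E] {f : ℝ → E} {a b : ℝ}

/-- The left-endpoint Riemann sum of `f` over the partition of the interval from `a` to `b` into
`n` equal parts. Like `∫ x in a..b, f x`, it is oriented: `b < a` is allowed. -/
noncomputable def leftRiemannSum (f : ℝ → E) (n : ℕ) (a b : ℝ) : E :=
  ((b - a) / n) • ∑ k ∈ range n, f (a + k * ((b - a) / n))

lemma add_mul_sub_div_mem_uIcc (a b : ℝ) {k n : ℕ} (hkn : k ≤ n) :
    a + k * ((b - a) / n) ∈ Set.uIcc a b := by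
  have hk : (k / n : ℝ) ∈ Set.Icc 0 1 :=
    ⟨by positivity, div_le_one_of_le₀ (by exact_mod_cast hkn) (by positivity)⟩
  rw [← segment_eq_uIcc]
  convert! lineMap_mem_segment ℝ a b hk using 1
  rw [AffineMap.lineMap_apply_ring']
  ring

lemma norm_integral_sub_smul_le [CompleteSpace E] {ε : ℝ}
    (hf : IntervalIntegrable f volume a b) (hε : ∀ x ∈ Set.uIoc a b, ‖f x - f a‖ ≤ ε) :
    ‖(∫ x in a..b, f x) - (b - a) • f a‖ ≤ ε * |b - a| := by
  rw [← intervalIntegral.integral_const, ← intervalIntegral.integral_sub hf (by simp)]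
  exact intervalIntegral.norm_integral_le_of_norm_le_const hε

lemma norm_integral_sub_sum_smul_le [CompleteSpace E] {p : ℕ → ℝ} {n : ℕ} {ε : ℝ}
    (hf : ∀ k < n, IntervalIntegrable f volume (p k) (p (k + 1)))
    (hε : ∀ k < n, ∀ x ∈ Set.uIoc (p k) (p (k + 1)), ‖f x - f (p k)‖ ≤ ε) :
    ‖(∫ x in p 0..p n, f x) - ∑ k ∈ range n, (p (k + 1) - p k) • f (p k)‖ ≤
      ε * ∑ k ∈ range n, |p (k + 1) - p k| := by
  rw [← intervalIntegral.sum_integral_adjacent_intervals hf, ← sum_sub_distrib, mul_sum]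
  exact norm_sum_le_of_le _ fun k hk =>
    norm_integral_sub_smul_le (hf k (mem_range.1 hk)) (hε k (mem_range.1 hk))

lemma norm_integral_sub_leftRiemannSum_le [CompleteSpace E] {n : ℕ} {ε : ℝ} (hn : n ≠ 0)
    (hf : IntervalIntegrable f volume a b)
    (hε : ∀ x ∈ Set.uIcc a b, ∀ y ∈ Set.uIcc a b, |y - x| ≤ |b - a| / n → ‖f y - f x‖ ≤ ε) :
    ‖(∫ x in a..b, f x) - leftRiemannSum f n a b‖ ≤ ε * |b - a| := by
  let p : ℕ → ℝ := fun k => a + k * ((b - a) / n)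
  have p_zero : p 0 = a := by simp [p]
  have p_last : p n = b := by simp only [p]; field_simp; ring
  have p_step (k : ℕ) : p (k + 1) - p k = (b - a) / n := by simp only [p]; push_cast; ring
  have abs_p_step (k : ℕ) : |p (k + 1) - p k| = |b - a| / n := by
    rw [p_step, abs_div, Nat.abs_cast]
  have p_mem {k : ℕ} (hk : k ≤ n) : p k ∈ Set.uIcc a b := add_mul_sub_div_mem_uIcc a b hk
  have p_subset {k : ℕ} (hk : k < n) : Set.uIcc (p k) (p (k + 1)) ⊆ Set.uIcc a b :=
    Set.uIcc_subset_uIcc (p_mem hk.le) (p_mem hk)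
  have sum_eq : ∑ k ∈ range n, (p (k + 1) - p k) • f (p k) = leftRiemannSum f n a b := by
    simp only [p_step, leftRiemannSum, smul_sum, p]
  have total_length : ∑ k ∈ range n, |p (k + 1) - p k| = |b - a| := by
    simp only [abs_p_step, sum_const, card_range, nsmul_eq_mul]
    field_simp
  have bound := norm_integral_sub_sum_smul_le (p := p)
    (fun k hk => hf.mono_set (p_subset hk))
    (fun k hk x hx =>
      have hx' := Set.uIoc_subset_uIcc hx
      hε _ (p_mem hk.le) _ (p_subset hk hx')
        ((Set.abs_sub_left_of_mem_uIcc hx').trans_eq (abs_p_step k)))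
  rwa [p_zero, p_last, sum_eq, total_length] at bound

theorem tendsto_leftRiemannSum_of_continuousOn [CompleteSpace E]
    (hf : ContinuousOn f (Set.uIcc a b)) :
    Tendsto (fun n => leftRiemannSum f n a b) atTop (𝓝 (∫ x in a..b, f x)) := by
  rw [Metric.tendsto_nhds]
  intro ε hε
  let η := ε / (|b - a| + 1)
  have hη : 0 < η := by positivity
  have hηε : η * |b - a| < ε := by
    rw [div_mul_eq_mul_div, div_lt_iff₀ (by positivity)]
    linarith
  obtain ⟨δ, hδ, hfδ⟩ := Metric.uniformContinuousOn_iff_le.1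
    (isCompact_uIcc.uniformContinuousOn_of_continuous hf) η hη
  have mesh_small : ∀ᶠ n : ℕ in atTop, |b - a| / n < δ :=
    (tendsto_const_div_atTop_nhds_zero_nat |b - a|).eventually_lt_const hδ
  filter_upwards [mesh_small, eventually_ne_atTop 0] with n hnδ hn
  rw [dist_comm, dist_eq_norm]
  refine (norm_integral_sub_leftRiemannSum_le hn hf.intervalIntegrable ?_).trans_lt hηε
  intro x hx y hy hxy
  rw [← dist_eq_norm]
  exact hfδ y hy x hx (hxy.trans hnδ.le)

end RiemannSum

section Arcsin

variable {c : ℝ}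

lemma hasDerivAt_arcsin_div {x : ℝ} (hx : x ∈ Set.Ioo (-c) c) :
    HasDerivAt (fun y => arcsin (y / c)) (1 / √(c ^ 2 - x ^ 2)) x := by
  have hc : 0 < c := by linarith [hx.1, hx.2]
  have hne_neg_one : x / c ≠ -1 := by rw [Ne, div_eq_iff hc.ne']; linarith [hx.1]
  have hne_one : x / c ≠ 1 := by rw [Ne, div_eq_iff hc.ne']; linarith [hx.2]
  have hsqrt : √(c ^ 2 - x ^ 2) = √(1 - (x / c) ^ 2) * c := by
    rw [show c ^ 2 - x ^ 2 = (1 - (x / c) ^ 2) * c ^ 2 by field_simp,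
      sqrt_mul' _ (sq_nonneg c), sqrt_sq hc.le]
  rw [hsqrt, ← one_div_mul_one_div]
  exact (hasDerivAt_arcsin hne_neg_one hne_one).comp x ((hasDerivAt_id x).div_const c)

theorem integral_one_div_sqrt_sq_sub_sq {a b : ℝ} (ha : a ∈ Set.Icc (-c) c)
    (hb : b ∈ Set.Icc (-c) c) :
    ∫ x in a..b, 1 / √(c ^ 2 - x ^ 2) = arcsin (b / c) - arcsin (a / c) := by
  have hcont : ContinuousOn (fun x => arcsin (x / c)) (Set.uIcc a b) := by fun_prop
  have hderiv (x : ℝ) (hx : x ∈ Set.Ioo (min a b) (max a b)) :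
      HasDerivAt (fun y => arcsin (y / c)) (1 / √(c ^ 2 - x ^ 2)) x :=
    hasDerivAt_arcsin_div ⟨(le_min ha.1 hb.1).trans_lt hx.1, hx.2.trans_le (max_le ha.2 hb.2)⟩
  exact intervalIntegral.integral_eq_sub_of_hasDeriv_right hcont
    (fun x hx => (hderiv x hx).hasDerivWithinAt)
    (intervalIntegral.intervalIntegrable_deriv_of_nonneg hcont hderiv fun x _ => by positivity)

lemma arcsin_one_div_sqrt_two : arcsin (1 / √2) = π / 4 := by
  refine arcsin_eq_of_sin_eq ?_ ⟨by linarith [pi_pos], by linarith [pi_pos]⟩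
  rw [sin_pi_div_four, sqrt_div_self']

lemma integral_one_div_sqrt_two_sub_sq : ∫ x in (-1 : ℝ)..1, 1 / √(2 - x ^ 2) = π / 2 := by
  have one_le_sqrt_two : 1 ≤ √2 := one_lt_sqrt_two.le
  have h := integral_one_div_sqrt_sq_sub_sq (c := √2) (a := -1) (b := 1)
    ⟨by linarith, by linarith⟩ ⟨by linarith, by linarith⟩
  rw [sq_sqrt zero_le_two, neg_div, arcsin_neg, arcsin_one_div_sqrt_two] at h
  linarith

end Arcsin

lemma continuousOn_one_div_sqrt_two_sub_sq :
    ContinuousOn (fun x : ℝ => 1 / √(2 - x ^ 2)) (Set.uIcc (-1) 1) := by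
  refine continuousOn_const.div (by fun_prop) fun x hx => ?_
  rw [Set.uIcc_of_le (by norm_num)] at hx
  exact (sqrt_pos.2 (by nlinarith [hx.1, hx.2])).ne'

lemma sqrt_sq_add_two_mul_mul_sub_sq {r : ℝ} (hr : 0 < r) (x : ℝ) :
    √(r ^ 2 + 2 * x * r - x ^ 2) = r * √(2 - (x / r - 1) ^ 2) := by
  rw [show r ^ 2 + 2 * x * r - x ^ 2 = r ^ 2 * (2 - (x / r - 1) ^ 2) by field_simp; ring,
    sqrt_mul (sq_nonneg r), sqrt_sq hr.le]

lemma leftRiemannSum_one_div_sqrt_two_sub_sq {r : ℕ} (hr : 0 < r) :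
    leftRiemannSum (fun x : ℝ => 1 / √(2 - x ^ 2)) (2 * r) (-1) 1 =
      1 / r + ∑ n ∈ Icc 1 (2 * r - 1), 1 / √((r : ℝ) ^ 2 + 2 * n * r - n ^ 2) := by
  have hr' : (0 : ℝ) < r := Nat.cast_pos.2 hr
  have mesh : ((1 : ℝ) - -1) / (2 * r : ℕ) = 1 / r := by push_cast; field_simp; norm_num
  have first_term : 1 / √((r : ℝ) ^ 2 + 2 * (0 : ℕ) * r - (0 : ℕ) ^ 2) = 1 / r := by
    simp [sqrt_sq hr'.le]
  calc leftRiemannSum (fun x : ℝ => 1 / √(2 - x ^ 2)) (2 * r) (-1) 1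
      = ∑ n ∈ range (2 * r), 1 / √((r : ℝ) ^ 2 + 2 * n * r - n ^ 2) := by
        simp only [leftRiemannSum, mesh, smul_eq_mul, mul_sum, mul_one_div, div_div,
          neg_add_eq_sub, sqrt_sq_add_two_mul_mul_sub_sq hr']
    _ = 1 / r + ∑ n ∈ Ico 1 (2 * r), 1 / √((r : ℝ) ^ 2 + 2 * n * r - n ^ 2) := by
        rw [range_eq_Ico, sum_eq_sum_Ico_succ_bot (by lia), first_term]
    _ = 1 / r + ∑ n ∈ Icc 1 (2 * r - 1), 1 / √((r : ℝ) ^ 2 + 2 * n * r - n ^ 2) := by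
        rw [Icc_sub_one_right_eq_Ico_of_not_isMin (not_isMin_of_lt (Nat.mul_pos two_pos hr))]

/-- the sequence
`r ↦ 2/r + 2 · ∑_{n=1}^{2r-1} 1/√(r² + 2nr - n²)` converges to `π`. -/
theorem asymptotic_arithmeticMean_tendsto_pi :
    Filter.Tendsto (fun r : ℕ =>
      2 / (r : ℝ) + 2 * ∑ n ∈ Finset.Icc 1 (2 * r - 1),
        1 / Real.sqrt ((r : ℝ) ^ 2 + 2 * n * r - n ^ 2))
      Filter.atTop (nhds Real.pi) := by
  have tendsto_two_mul : Tendsto (fun r : ℕ => 2 * r) atTop atTop :=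
    tendsto_id.const_mul_atTop' two_pos
  have tendsto_sum :=
    ((tendsto_leftRiemannSum_of_continuousOn continuousOn_one_div_sqrt_two_sub_sq).comp
      tendsto_two_mul).const_mul 2
  rw [integral_one_div_sqrt_two_sub_sq, mul_div_cancel₀ π two_ne_zero] at tendsto_sum
  refine tendsto_sum.congr' ?_
  filter_upwards [eventually_gt_atTop 0] with r hr
  rw [Function.comp_apply, leftRiemannSum_one_div_sqrt_two_sub_sq hr]
  ring
end

section
/- The sequence of real numbers r ↦ (1/(8r²)) · ( r + Σ_{n=1}^{2r−1} √(r² + 2nr − n²) ), indexed by integers r ≥ 1, converges to π/16 + 1/8 as r → ∞. -/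
open Filter Finset Real

/-! Substituting `x = n / r - 1` turns each term into `√(r² + 2nr - n²) = r √(2 - x²)`. The first
term `r` is the half-sum of the contributions of the endpoints `x = ±1`, so the mean over a circular
path of radius `r` is `1 / 8` times the trapezoidal approximation with `2r` trapezoids of
`∫ x in (-1)..1, √(2 - x²) = 1 + π / 2`, the area under a quarter of a circle of radius `√2`. -/

lemma exists_forall_norm_iteratedDerivWithin_succ_le {𝕜 E : Type*} [NontriviallyNormedField 𝕜]
    [NormedAddCommGroup E] [NormedSpace 𝕜 E] {f : 𝕜 → E} {s : Set 𝕜} {n : ℕ} (hs : IsCompact s)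
    (hs' : UniqueDiffOn 𝕜 s) (hf : ContDiffOn 𝕜 (n + 1 : ℕ) f s) :
    ∃ C, ∀ x, ‖iteratedDerivWithin (n + 1) f s x‖ ≤ C := by
  obtain ⟨C, hC⟩ :=
    hs.exists_bound_of_continuousOn (hf.continuousOn_iteratedDerivWithin le_rfl hs')
  refine ⟨max C 0, fun x ↦ ?_⟩
  by_cases hx : x ∈ s
  · exact (hC x hx).trans (le_max_left C 0)
  · rw [iteratedDerivWithin_succ,
      derivWithin_zero_of_notMem_closure (by rwa [hs.isClosed.closure_eq]), norm_zero]
    exact le_max_right C 0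

theorem tendsto_trapezoidal_integral {f : ℝ → ℝ} {a b : ℝ}
    (hf : ContDiffOn ℝ 2 f (Set.uIcc a b)) :
    Tendsto (fun N ↦ trapezoidal_integral f N a b) atTop (nhds (∫ x in a..b, f x)) := by
  rcases eq_or_ne a b with rfl | hab
  · simp
  obtain ⟨C, hC⟩ :=
    exists_forall_norm_iteratedDerivWithin_succ_le (n := 1) isCompact_uIcc
      (uniqueDiffOn_uIcc hab) hf
  have error_le : ∀ᶠ N : ℕ in atTop,
      |trapezoidal_integral f N a b - ∫ x in a..b, f x| ≤ |b - a| ^ 3 * C / (12 * N ^ 2) := by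
    filter_upwards [eventually_gt_atTop 0] with N hN
    exact trapezoidal_error_le_of_c2 hf hC hN
  have bound_tendsto :
      Tendsto (fun N : ℕ ↦ |b - a| ^ 3 * C / (12 * (N : ℝ) ^ 2)) atTop (nhds 0) :=
    (((tendsto_pow_atTop two_ne_zero).comp tendsto_natCast_atTop_atTop).const_mul_atTop
      (by norm_num)).const_div_atTop _
  exact tendsto_iff_norm_sub_tendsto_zero.2
    (squeeze_zero' (Eventually.of_forall fun _ ↦ norm_nonneg _) error_le bound_tendsto)

lemma integral_sqrt_sq_sub_sq {R α β : ℝ} (hR : 0 ≤ R) (hcos : ∀ θ ∈ Set.uIcc α β, 0 ≤ cos θ) :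
    ∫ x in (R * sin α)..(R * sin β), √(R ^ 2 - x ^ 2) =
      R ^ 2 * ((cos β * sin β - cos α * sin α + β - α) / 2) := by
  have sqrt_eq : ∀ θ ∈ Set.uIcc α β, √(R ^ 2 - (R * sin θ) ^ 2) = R * cos θ := fun θ hθ ↦ by
    rw [show R ^ 2 - (R * sin θ) ^ 2 = (R * cos θ) ^ 2 by rw [mul_pow, mul_pow, cos_sq']; ring,
      sqrt_sq (mul_nonneg hR (hcos θ hθ))]
  calc ∫ x in (R * sin α)..(R * sin β), √(R ^ 2 - x ^ 2)
    _ = ∫ θ in α..β, √(R ^ 2 - (R * sin θ) ^ 2) * (R * cos θ) :=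
      (intervalIntegral.integral_comp_mul_deriv (fun θ _ ↦ (hasDerivAt_sin θ).const_mul R)
        (by fun_prop) (g := fun x ↦ √(R ^ 2 - x ^ 2)) (by fun_prop)).symm
    _ = ∫ θ in α..β, R ^ 2 * cos θ ^ 2 :=
      intervalIntegral.integral_congr fun θ hθ ↦ by simp only [sqrt_eq θ hθ]; ring
    _ = R ^ 2 * ((cos β * sin β - cos α * sin α + β - α) / 2) := by
      rw [intervalIntegral.integral_const_mul, integral_cos_sq]

lemma integral_sqrt_two_sub_sq : ∫ x in (-1 : ℝ)..1, √(2 - x ^ 2) = 1 + π / 2 := by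
  have cos_nonneg : ∀ θ ∈ Set.uIcc (-(π / 4)) (π / 4), 0 ≤ cos θ := fun θ hθ ↦ by
    rw [Set.uIcc_of_le (by linarith [pi_pos])] at hθ
    exact cos_nonneg_of_neg_pi_div_two_le_of_le (by linarith [hθ.1, pi_pos])
      (by linarith [hθ.2, pi_pos])
  have sq_sqrt_two : √2 ^ 2 = (2 : ℝ) := sq_sqrt zero_le_two
  have sqrt_two_mul_sin : √2 * sin (π / 4) = 1 := by
    rw [sin_pi_div_four]; linear_combination sq_sqrt_two / 2
  have arc := integral_sqrt_sq_sub_sq (sqrt_nonneg 2) cos_nonneg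
  rw [sin_neg, cos_neg, mul_neg, sqrt_two_mul_sin, sq_sqrt_two, cos_pi_div_four,
    sin_pi_div_four] at arc
  rw [arc]
  linear_combination sq_sqrt_two / 2

lemma contDiffOn_sqrt_two_sub_sq {n : WithTop ℕ∞} :
    ContDiffOn ℝ n (fun x : ℝ ↦ √(2 - x ^ 2)) (Set.uIcc (-1) 1) := by
  refine ContDiffOn.sqrt (by fun_prop) fun x hx ↦ ?_
  rw [Set.uIcc_of_le (by norm_num)] at hx
  have : x ^ 2 ≤ 1 := by nlinarith [hx.1, hx.2]
  linarith

lemma sqrt_sq_add_two_mul_sub_sq {r : ℝ} (hr : 0 < r) (t : ℝ) :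
    √(r ^ 2 + 2 * t * r - t ^ 2) = r * √(2 - (t / r - 1) ^ 2) := by
  rw [show r ^ 2 + 2 * t * r - t ^ 2 = r ^ 2 * (2 - (t / r - 1) ^ 2) by field_simp; ring,
    sqrt_mul (sq_nonneg r), sqrt_sq hr.le]

lemma trapezoidal_integral_sqrt_two_sub_sq {r : ℕ} (hr : 0 < r) :
    trapezoidal_integral (fun x ↦ √(2 - x ^ 2)) (2 * r) (-1) 1 =
      1 / (r : ℝ) ^ 2 *
        (r + ∑ n ∈ Icc 1 (2 * r - 1), √((r : ℝ) ^ 2 + 2 * n * r - n ^ 2)) := by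
  have hr' : (0 : ℝ) < r := Nat.cast_pos.2 hr
  have endpoints : (√(2 - (-1) ^ 2) + √(2 - 1 ^ 2)) / 2 = (1 : ℝ) := by norm_num
  have nodes : ∑ k ∈ range (2 * r - 1), √(2 - (-1 + (k + 1) * (1 - -1) / (2 * r : ℕ)) ^ 2) =
      ∑ n ∈ Icc 1 (2 * r - 1), √(2 - ((n : ℝ) / r - 1) ^ 2) := by
    rw [← Ico_add_one_right_eq_Icc, sum_Ico_eq_sum_range, Nat.add_sub_cancel]
    refine sum_congr rfl fun k _ ↦ ?_
    congr 3
    push_cast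
    field_simp
    ring
  rw [trapezoidal_integral, endpoints, nodes,
    sum_congr rfl fun (n : ℕ) _ ↦ sqrt_sq_add_two_mul_sub_sq hr' n, ← mul_sum]
  push_cast
  field_simp
  ring

/-- the sequence
`r ↦ (1/(8r²)) · (r + ∑_{n=1}^{2r-1} √(r² + 2nr - n²))` converges to
`π/16 + 1/8`. -/
theorem asymptotic_arithmeticMean_inv_pi_tendsto :
    Filter.Tendsto (fun r : ℕ =>
      1 / (8 * (r : ℝ) ^ 2) * ((r : ℝ) + ∑ n ∈ Finset.Icc 1 (2 * r - 1),
        Real.sqrt ((r : ℝ) ^ 2 + 2 * n * r - n ^ 2)))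
      Filter.atTop (nhds (Real.pi / 16 + 1 / 8)) := by
  have two_mul_atTop : Tendsto (fun r : ℕ ↦ 2 * r) atTop atTop :=
    tendsto_id.const_mul_atTop' two_pos
  have trapezoidal_tendsto :=
    ((tendsto_trapezoidal_integral contDiffOn_sqrt_two_sub_sq).comp two_mul_atTop).const_mul
      (1 / 8 : ℝ)
  rw [integral_sqrt_two_sub_sq, show 1 / 8 * (1 + π / 2) = π / 16 + 1 / 8 by ring]
    at trapezoidal_tendsto
  refine trapezoidal_tendsto.congr' ?_
  filter_upwards [eventually_gt_atTop 0] with r hr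
  rw [Function.comp_apply, trapezoidal_integral_sqrt_two_sub_sq hr, ← mul_assoc,
    one_div_mul_one_div]
end
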